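/- arXiv:1911.10067 — 2 statements merged into one kernel-verified Lean document; each statement's English description precedes it below -/
import Mathlib

section
/- Let N ≥ 1, let v, a ∈ ℝ, let l₀, r₀ ∈ ℝ^N, and let M be a real N×N matrix such that v is not an eigenvalue of M. Let T be the (N+2)×(N+2) matrix [[v, a, l₀ᵀ],[0, v, 0],[0, r₀, M]] in (1+1+N) block form. Then the characteristic polynomial of T equals (X − v)² times the characteristic polynomial of M, and the eigenspace ker(T − v I_{N+2}) has dimension 2 if a = l₀ᵀ (M − v I_N)⁻¹ r₀ and dimension 1 otherwise; i.e., v is a semisimple eigenvalue of T if and only if a = l₀ᵀ (M − v I_N)⁻¹ r₀. -/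
open Matrix

noncomputable section

/-- Index type for `(N+2) × (N+2)` matrices in `1 + 1 + N` block form. -/
abbrev Idx (N : ℕ) : Type := Fin 1 ⊕ Fin 1 ⊕ Fin N

/-- The block matrix `[[v, a, l₀ᵀ],[0, v, 0],[0, r₀, M]]`. -/
def Tmat (N : ℕ) (v a : ℝ) (l₀ r₀ : Fin N → ℝ) (M : Matrix (Fin N) (Fin N) ℝ) :
    Matrix (Idx N) (Idx N) ℝ :=
  Matrix.of fun i j =>
    match i, j with
    | Sum.inl _, Sum.inl _ => v
    | Sum.inl _, Sum.inr (Sum.inl _) => a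
    | Sum.inl _, Sum.inr (Sum.inr j') => l₀ j'
    | Sum.inr (Sum.inl _), Sum.inr (Sum.inl _) => v
    | Sum.inr (Sum.inr i'), Sum.inr (Sum.inl _) => r₀ i'
    | Sum.inr (Sum.inr i'), Sum.inr (Sum.inr j') => M i' j'
    | _, _ => 0

end

/-!
`T` is block triangular with diagonal blocks `v`, `v`, `M`, which gives its characteristic
polynomial. Since `D = M - v` is invertible, block Gaussian elimination turns `T - v` into the
direct sum of `D` and the Schur complement `[[0, S], [0, 0]]`, where `S = a - l₀ᵀ D⁻¹ r₀`. Hence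
`rank (T - v) = rank S + N`, and rank-nullity leaves a kernel of dimension `2 - rank S`.
-/

theorem finrank_range_prodMap {K V V' W W' : Type*} [DivisionRing K] [AddCommGroup V]
    [AddCommGroup V'] [AddCommGroup W] [AddCommGroup W'] [Module K V] [Module K V'] [Module K W]
    [Module K W'] [FiniteDimensional K V] [FiniteDimensional K V'] (f : V →ₗ[K] W)
    (g : V' →ₗ[K] W') :
    Module.finrank K (LinearMap.range (f.prodMap g)) =
      Module.finrank K (LinearMap.range f) + Module.finrank K (LinearMap.range g) := by
  let ι := (LinearMap.range f).subtype.prodMap (LinearMap.range g).subtype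
  have hι : Function.Injective ι :=
    (LinearMap.range f).subtype_injective.prodMap (LinearMap.range g).subtype_injective
  have hrange : LinearMap.range (f.prodMap g) = LinearMap.range ι := by
    simp only [ι, LinearMap.range_prodMap, Submodule.range_subtype]
  rw [hrange, LinearMap.finrank_range_of_inj hι, Module.finrank_prod]

section Rank

variable {K l m n o : Type*} [Field K] [Fintype m] [Fintype o]

theorem finrank_ker_toLin'_add_rank [DecidableEq m] (A : Matrix l m K) :
    Module.finrank K (LinearMap.ker (toLin' A)) + A.rank = Fintype.card m := by
  rw [add_comm, ← Module.finrank_fintype_fun_eq_card K]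
  exact LinearMap.finrank_range_add_finrank_ker (toLin' A)

theorem rank_eq_one_of_unique {R : Type*} [CommRing R] [IsDomain R] [Unique m] {A : Matrix m m R}
    (hA : A default default ≠ 0) : A.rank = 1 := by
  classical
  rw [rank_of_det_ne_zero (by rwa [det_unique]), Fintype.card_unique]

theorem rank_fromBlocks_zero₁₂₂₁ (A : Matrix l m K) (D : Matrix n o K) :
    (fromBlocks A 0 0 D).rank = A.rank + D.rank := by
  let e := LinearEquiv.sumArrowLequivProdArrow m o K K
  let e' := LinearEquiv.sumArrowLequivProdArrow l n K K
  have hconj : (fromBlocks A 0 0 D).mulVecLin =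
      e'.symm.toLinearMap ∘ₗ A.mulVecLin.prodMap D.mulVecLin ∘ₗ e.toLinearMap := by
    ext x (i | i) <;> simp [e, e', fromBlocks_mulVec] <;> rfl
  rw [rank, hconj, LinearMap.range_comp, LinearEquiv.finrank_map_eq,
    LinearMap.range_comp_of_range_eq_top _ e.range, finrank_range_prodMap, rank, rank]

theorem rank_fromBlocks_zero₁₁₂₁₂₂ (B : Matrix l o K) :
    (fromBlocks (0 : Matrix l m K) B (0 : Matrix n m K) 0).rank = B.rank := by
  rw [← rank_submatrix _ (Equiv.refl _) (Equiv.sumComm o m)]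
  have hswap : (fromBlocks (0 : Matrix l m K) B (0 : Matrix n m K) 0).submatrix
      (Equiv.refl _) (Equiv.sumComm o m) = fromBlocks B 0 0 0 :=
    fromBlocks_submatrix_sum_swap_right _ _ _ _ _
  rw [hswap, rank_fromBlocks_zero₁₂₂₁, rank_zero, add_zero]

theorem rank_fromBlocks_of_isUnit₂₂ [Finite l] [Fintype n] [DecidableEq n]
    (A : Matrix l m K) (B : Matrix l n K) (C : Matrix n m K) {D : Matrix n n K} (hD : IsUnit D) :
    (fromBlocks A B C D).rank = (A - B * D⁻¹ * C).rank + Fintype.card n := by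
  classical
  have := Fintype.ofFinite l
  have := hD.invertible
  rw [fromBlocks_eq_of_invertible₂₂, rank_mul_eq_left_of_isUnit_det _ _ (by simp),
    rank_mul_eq_right_of_isUnit_det _ _ (by simp), rank_fromBlocks_zero₁₂₂₁, rank_of_isUnit D hD,
    invOf_eq_nonsing_inv]

end Rank

section WhithamMatrix

variable {R p q n : Type*} [CommRing R] [DecidableEq p] [DecidableEq q]

/-- The Whitham matrix `[[v, A, L], [0, v, 0], [0, B, M]]` at a harmonic or soliton limit, with the
two diagonal entries `v` widened to scalar blocks indexed by arbitrary types `p` and `q`. -/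
def whithamMatrix (v : R) (A : Matrix p q R) (L : Matrix p n R) (B : Matrix n q R)
    (M : Matrix n n R) : Matrix (p ⊕ q ⊕ n) (p ⊕ q ⊕ n) R :=
  fromBlocks (v • 1) (fromCols A L) 0 (fromBlocks (v • 1) 0 B M)

theorem whithamMatrix_sub_smul_one [DecidableEq n] (v : R) (A : Matrix p q R) (L : Matrix p n R)
    (B : Matrix n q R) (M : Matrix n n R) :
    whithamMatrix v A L B M - v • 1 = whithamMatrix 0 A L B (M - v • 1) := by
  simp only [whithamMatrix, ← fromBlocks_one, fromBlocks_smul, sub_eq_add_neg,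
    fromBlocks_neg, fromBlocks_add]
  simp

open Polynomial in
theorem charpoly_whithamMatrix [Fintype p] [Fintype q] [Fintype n] [DecidableEq n] (v : R)
    (A : Matrix p q R) (L : Matrix p n R) (B : Matrix n q R) (M : Matrix n n R) :
    (whithamMatrix v A L B M).charpoly =
      (X - C v) ^ (Fintype.card p + Fintype.card q) * M.charpoly := by
  simp only [whithamMatrix, charpoly_fromBlocks_zero₂₁, charpoly_fromBlocks_zero₁₂,
    smul_one_eq_diagonal, charpoly_diagonal, Finset.prod_const, Finset.card_univ, pow_add,
    mul_assoc]

theorem whithamMatrix_submatrix_sumAssoc (v : R) (A : Matrix p q R) (L : Matrix p n R)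
    (B : Matrix n q R) (M : Matrix n n R) :
    (whithamMatrix v A L B M).submatrix (Equiv.sumAssoc p q n) (Equiv.sumAssoc p q n) =
      fromBlocks (fromBlocks (v • 1) A 0 (v • 1)) (fromRows L 0) (fromCols 0 B) M := by
  ext ((i | i) | i) ((j | j) | j) <;> simp [whithamMatrix]

end WhithamMatrix

section Kernel

variable {K p q n : Type*} [Field K] [Fintype p] [Fintype q] [Fintype n]
  [DecidableEq p] [DecidableEq q] [DecidableEq n]

theorem rank_whithamMatrix_zero (A : Matrix p q K) (L : Matrix p n K) (B : Matrix n q K)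
    {D : Matrix n n K} (hD : IsUnit D) :
    (whithamMatrix 0 A L B D).rank = (A - L * D⁻¹ * B).rank + Fintype.card n := by
  have hSchur : fromBlocks 0 A 0 0 - fromRows L 0 * D⁻¹ * fromCols 0 B =
      fromBlocks (0 : Matrix p p K) (A - L * D⁻¹ * B) (0 : Matrix q p K) 0 := by
    rw [fromRows_mul, fromRows_mul_fromCols, sub_eq_add_neg, fromBlocks_neg, fromBlocks_add]
    simp only [Matrix.mul_zero, Matrix.zero_mul, neg_zero, add_zero, ← sub_eq_add_neg]
  rw [← rank_submatrix _ (Equiv.sumAssoc p q n) (Equiv.sumAssoc p q n),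
    whithamMatrix_submatrix_sumAssoc, zero_smul, zero_smul, rank_fromBlocks_of_isUnit₂₂ _ _ _ hD,
    hSchur, rank_fromBlocks_zero₁₁₂₁₂₂]

theorem finrank_ker_whithamMatrix_add_rank (v : K) (A : Matrix p q K) (L : Matrix p n K)
    (B : Matrix n q K) {M : Matrix n n K} (hM : IsUnit (M - v • 1)) :
    Module.finrank K (LinearMap.ker (toLin' (whithamMatrix v A L B M - v • 1))) +
      (A - L * (M - v • 1)⁻¹ * B).rank = Fintype.card p + Fintype.card q := by
  rw [whithamMatrix_sub_smul_one]
  have hnullity := finrank_ker_toLin'_add_rank (whithamMatrix 0 A L B (M - v • 1))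
  rw [rank_whithamMatrix_zero A L B hM, Fintype.card_sum, Fintype.card_sum] at hnullity
  lia

open Polynomial in
theorem stmt15_general (v a : K) (l r : n → K) (M : Matrix n n K) (hv : (M - v • 1).det ≠ 0) :
    let T := whithamMatrix v (of fun _ _ : Fin 1 => a) (replicateRow (Fin 1) l)
      (replicateCol (Fin 1) r) M
    T.charpoly = (X - C v) ^ 2 * M.charpoly ∧
    (a = l ⬝ᵥ (M - v • 1)⁻¹ *ᵥ r →
      Module.finrank K (LinearMap.ker (toLin' (T - v • 1))) = 2) ∧
    (a ≠ l ⬝ᵥ (M - v • 1)⁻¹ *ᵥ r →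
      Module.finrank K (LinearMap.ker (toLin' (T - v • 1))) = 1) := by
  intro T
  set S := (of fun _ _ : Fin 1 => a) -
    replicateRow (Fin 1) l * (M - v • 1)⁻¹ * replicateCol (Fin 1) r with hS
  have hentry (i j : Fin 1) : S i j = a - l ⬝ᵥ (M - v • 1)⁻¹ *ᵥ r := by
    rw [hS, Matrix.mul_assoc, ← replicateCol_mulVec]
    rfl
  have hker : Module.finrank K (LinearMap.ker (toLin' (T - v • 1))) + S.rank = 2 :=
    finrank_ker_whithamMatrix_add_rank v _ _ _
      ((isUnit_iff_isUnit_det _).mpr (isUnit_iff_ne_zero.mpr hv))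
  refine ⟨charpoly_whithamMatrix v _ _ _ M, fun ha => ?_, fun ha => ?_⟩
  · have hzero : S = 0 := by
      ext i j
      rw [hentry, sub_eq_zero.mpr ha, Matrix.zero_apply]
    rwa [hzero, rank_zero] at hker
  · rw [rank_eq_one_of_unique (by rw [hentry]; exact sub_ne_zero.mpr ha)] at hker
    exact Nat.succ_injective hker

end Kernel

theorem Tmat_eq_whithamMatrix (N : ℕ) (v a : ℝ) (l₀ r₀ : Fin N → ℝ)
    (M : Matrix (Fin N) (Fin N) ℝ) :
    Tmat N v a l₀ r₀ M = whithamMatrix v (of fun _ _ : Fin 1 => a) (replicateRow (Fin 1) l₀)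
      (replicateCol (Fin 1) r₀) M := by
  ext (i | i | i) (j | j | j) <;>
    simp [Tmat, whithamMatrix, Matrix.one_apply, eq_iff_true_of_subsingleton]

open Polynomial in
/-- semisimplicity criterion underlying Corollary 5: for
`T = [[v,a,l₀ᵀ],[0,v,0],[0,r₀,M]]` with `v` not an eigenvalue of `M`, the
characteristic polynomial of `T` is `(X − v)²·charpoly M`, and the eigenspace
`ker(T − v I)` has dimension `2` if `a = l₀ᵀ(M − v I)⁻¹ r₀`, dimension `1`
otherwise; i.e. `v` is semisimple iff `a = l₀ᵀ(M − v I)⁻¹ r₀`. -/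
theorem stmt15 (N : ℕ) (hN : 1 ≤ N) (v a : ℝ) (l₀ r₀ : Fin N → ℝ)
    (M : Matrix (Fin N) (Fin N) ℝ)
    (hv : (M - v • (1 : Matrix (Fin N) (Fin N) ℝ)).det ≠ 0) :
    (Tmat N v a l₀ r₀ M).charpoly = (X - C v) ^ 2 * M.charpoly ∧
    (a = l₀ ⬝ᵥ (M - v • (1 : Matrix (Fin N) (Fin N) ℝ))⁻¹.mulVec r₀ →
      Module.finrank ℝ
        (LinearMap.ker (Matrix.toLin'
          (Tmat N v a l₀ r₀ M - v • (1 : Matrix (Idx N) (Idx N) ℝ)))) = 2) ∧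
    (a ≠ l₀ ⬝ᵥ (M - v • (1 : Matrix (Fin N) (Fin N) ℝ))⁻¹.mulVec r₀ →
      Module.finrank ℝ
        (LinearMap.ker (Matrix.toLin'
          (Tmat N v a l₀ r₀ M - v • (1 : Matrix (Idx N) (Idx N) ℝ)))) = 1) := by
  rw [Tmat_eq_whithamMatrix]
  exact stmt15_general v a l₀ r₀ M hv
end

section
/- Let τ, f : I → ℝ be smooth with τ > 0 on an open interval I, let b ≠ 0 and c, λ₁, λ₂ be real numbers. Define g(v) := −((c/b) v + λ₂)/τ(v), the Hamiltonian density at zero gradient H₀(v, u) := (1/2) τ(v) u² + f(v), the matrix B := [[0, b],[b, 0]], and the potential W(v) := −f(v) − (1/2) τ(v) g(v)² − (c/b) v g(v) − λ₁ v − λ₂ g(v). Then for every v ∈ I: tr( B ∇²H₀(v, g(v)) + c I₂ ) = −2 b τ(v) g'(v) and det( B ∇²H₀(v, g(v)) + c I₂ ) = b² τ(v) W''(v), where ∇²H₀ is the Hessian of H₀ in (v, u) evaluated at (v, g(v)), and W'' is the second derivative of the function v ↦ W(v). -/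
open Matrix

/-!
Differentiate the critical-point relation `∂₂H(x, g x) = -(k x + l₂)`, where `k = c / b`: this gives
`∂₁∂₂H + g' ∂₂∂₂H = -k` along the graph of `g`, and, by the symmetry of the Hessian, both diagonal
entries of `B ∇²H + c` are `b (∂₁∂₂H + k) = -b g' ∂₂∂₂H`, whence the trace. By the same relation the
terms of `W'` that contain `g'` cancel, so `W' = -∂₁H(x, g x) - k g - l₁` and
`W'' = -∂₁∂₁H - g' (∂₁∂₂H + k)`, whence the determinant.
-/

open Filter Function Topology

section PartialDerivatives

variable {𝕜 E : Type*} [NontriviallyNormedField 𝕜] [NormedAddCommGroup E] [NormedSpace 𝕜 E]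
  {F : 𝕜 → 𝕜 → E} {v u : 𝕜}

/-- The partial derivative of a curried function of two scalar variables in its first variable. -/
noncomputable def partialFst (F : 𝕜 → 𝕜 → E) : 𝕜 → 𝕜 → E :=
  fun x y => deriv (fun z => F z y) x

/-- The partial derivative of a curried function of two scalar variables in its second variable. -/
noncomputable def partialSnd (F : 𝕜 → 𝕜 → E) : 𝕜 → 𝕜 → E :=
  fun x y => deriv (F x) y

theorem eventually_differentiableAt_of_contDiffAt {V : Type*} [NormedAddCommGroup V]
    [NormedSpace 𝕜 V] {f : V → E} {x : V} (hf : ContDiffAt 𝕜 1 f x) :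
    ∀ᶠ y in 𝓝 x, DifferentiableAt 𝕜 f y :=
  (hf.eventually (by simp)).mono fun _ hy => hy.differentiableAt_one

theorem partialFst_eq_fderiv (hF : DifferentiableAt 𝕜 (uncurry F) (v, u)) :
    partialFst F v u = fderiv 𝕜 (uncurry F) (v, u) (1, 0) :=
  (hF.hasFDerivAt.comp_hasDerivAt (f := fun x => (x, u)) v
    ((hasDerivAt_id v).prodMk (hasDerivAt_const v u))).deriv

theorem partialSnd_eq_fderiv (hF : DifferentiableAt 𝕜 (uncurry F) (v, u)) :
    partialSnd F v u = fderiv 𝕜 (uncurry F) (v, u) (0, 1) :=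
  (hF.hasFDerivAt.comp_hasDerivAt u ((hasDerivAt_const u v).prodMk (hasDerivAt_id u))).deriv

theorem hasDerivAt_along_graph {g : 𝕜 → 𝕜} {g' : 𝕜}
    (hF : DifferentiableAt 𝕜 (uncurry F) (v, g v)) (hg : HasDerivAt g g' v) :
    HasDerivAt (fun x => F x (g x)) (partialFst F v (g v) + g' • partialSnd F v (g v)) v := by
  have h := hF.hasFDerivAt.comp_hasDerivAt v ((hasDerivAt_id v).prodMk hg)
  have hsplit : ((1, g') : 𝕜 × 𝕜) = (1, 0) + g' • (0, 1) := by simp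
  rw [hsplit, map_add, map_smul, ← partialFst_eq_fderiv hF, ← partialSnd_eq_fderiv hF] at h
  exact h

theorem uncurry_partialFst_eventuallyEq (hF : ContDiffAt 𝕜 1 (uncurry F) (v, u)) :
    uncurry (partialFst F) =ᶠ[𝓝 (v, u)] fun p => fderiv 𝕜 (uncurry F) p (1, 0) :=
  (eventually_differentiableAt_of_contDiffAt hF).mono fun _ hp => partialFst_eq_fderiv hp

theorem uncurry_partialSnd_eventuallyEq (hF : ContDiffAt 𝕜 1 (uncurry F) (v, u)) :
    uncurry (partialSnd F) =ᶠ[𝓝 (v, u)] fun p => fderiv 𝕜 (uncurry F) p (0, 1) :=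
  (eventually_differentiableAt_of_contDiffAt hF).mono fun _ hp => partialSnd_eq_fderiv hp

theorem differentiableAt_fderiv_of_contDiffAt_two {V : Type*} [NormedAddCommGroup V]
    [NormedSpace 𝕜 V] {f : V → E} {x : V} (hf : ContDiffAt 𝕜 2 f x) :
    DifferentiableAt 𝕜 (fderiv 𝕜 f) x :=
  (hf.fderiv_right (m := 1) (by norm_num)).differentiableAt_one

theorem differentiableAt_partialFst (hF : ContDiffAt 𝕜 2 (uncurry F) (v, u)) :
    DifferentiableAt 𝕜 (uncurry (partialFst F)) (v, u) :=
  ((differentiableAt_fderiv_of_contDiffAt_two hF).clm_apply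
    (differentiableAt_const _)).congr_of_eventuallyEq
    (uncurry_partialFst_eventuallyEq (hF.of_le one_le_two))

theorem differentiableAt_partialSnd (hF : ContDiffAt 𝕜 2 (uncurry F) (v, u)) :
    DifferentiableAt 𝕜 (uncurry (partialSnd F)) (v, u) :=
  ((differentiableAt_fderiv_of_contDiffAt_two hF).clm_apply
    (differentiableAt_const _)).congr_of_eventuallyEq
    (uncurry_partialSnd_eventuallyEq (hF.of_le one_le_two))

theorem partialSnd_partialFst_comm {n : WithTop ℕ∞} (hF : ContDiffAt 𝕜 n (uncurry F) (v, u))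
    (hn : minSmoothness 𝕜 2 ≤ n) :
    partialSnd (partialFst F) v u = partialFst (partialSnd F) v u := by
  have hF₂ : ContDiffAt 𝕜 2 (uncurry F) (v, u) := hF.of_le (le_minSmoothness.trans hn)
  have hF₁ : ContDiffAt 𝕜 1 (uncurry F) (v, u) := hF₂.of_le one_le_two
  have hdF := differentiableAt_fderiv_of_contDiffAt_two hF₂
  rw [partialSnd_eq_fderiv (differentiableAt_partialFst hF₂),
    partialFst_eq_fderiv (differentiableAt_partialSnd hF₂),
    (uncurry_partialFst_eventuallyEq hF₁).fderiv_eq,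
    (uncurry_partialSnd_eventuallyEq hF₁).fderiv_eq,
    fderiv_clm_apply hdF (differentiableAt_const _),
    fderiv_clm_apply hdF (differentiableAt_const _)]
  simpa using hF.isSymmSndFDerivAt hn (0, 1) (1, 0)

end PartialDerivatives

section CharacteristicMatrix

variable {𝕜 : Type*} [NontriviallyNormedField 𝕜] {H : 𝕜 → 𝕜 → 𝕜} {g : 𝕜 → 𝕜}
  {v b c k l₁ l₂ : 𝕜}

/-- The Hessian matrix of a function of two scalar variables, formed from iterated partial
derivatives. -/
noncomputable def hessianMatrix (H : 𝕜 → 𝕜 → 𝕜) (v u : 𝕜) : Matrix (Fin 2) (Fin 2) 𝕜 :=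
  !![partialFst (partialFst H) v u, partialFst (partialSnd H) v u;
     partialSnd (partialFst H) v u, partialSnd (partialSnd H) v u]

/-- The characteristic matrix `B ∇²H + c` of the dispersionless system with Hamiltonian density `H`,
shifted by the wave speed `c`, where `B = [[0, b], [b, 0]]`. -/
noncomputable def shiftedCharacteristicMatrix (b c : 𝕜) (H : 𝕜 → 𝕜 → 𝕜) (v u : 𝕜) :
    Matrix (Fin 2) (Fin 2) 𝕜 :=
  !![0, b; b, 0] * hessianMatrix H v u + c • (1 : Matrix (Fin 2) (Fin 2) 𝕜)

theorem shiftedCharacteristicMatrix_eq (b c : 𝕜) (H : 𝕜 → 𝕜 → 𝕜) (v u : 𝕜) :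
    shiftedCharacteristicMatrix b c H v u =
      !![b * partialSnd (partialFst H) v u + c, b * partialSnd (partialSnd H) v u;
         b * partialFst (partialFst H) v u, b * partialFst (partialSnd H) v u + c] := by
  ext i j
  fin_cases i <;> fin_cases j <;> simp [shiftedCharacteristicMatrix, hessianMatrix]

/-- `u = g x` is, near `v`, a differentiable family of critical points of
`u ↦ H x u + k x u + l₂ u`. This is the profile equation that determines the second component of a
traveling wave of speed `c = b k`. -/
structure IsWaveProfileAt (H : 𝕜 → 𝕜 → 𝕜) (k l₂ : 𝕜) (g : 𝕜 → 𝕜) (v : 𝕜) : Prop where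
  differentiable : ∀ᶠ x in 𝓝 v, DifferentiableAt 𝕜 g x
  critical : ∀ᶠ x in 𝓝 v, partialSnd H x (g x) = -(k * x + l₂)

/-- The potential that governs the first component of a traveling wave with profile `u = g v`;
the paper's `W` is the case `k = c / b`. -/
def wavePotential (H : 𝕜 → 𝕜 → 𝕜) (g : 𝕜 → 𝕜) (k l₁ l₂ : 𝕜) : 𝕜 → 𝕜 :=
  fun v => -H v (g v) - k * v * g v - l₁ * v - l₂ * g v

theorem IsWaveProfileAt.deriv_critical (hg : IsWaveProfileAt H k l₂ g v)
    (hH : ContDiffAt 𝕜 2 (uncurry H) (v, g v)) :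
    partialFst (partialSnd H) v (g v) + deriv g v * partialSnd (partialSnd H) v (g v) = -k := by
  have hgraph := hasDerivAt_along_graph (differentiableAt_partialSnd hH)
    hg.differentiable.self_of_nhds.hasDerivAt
  have hline : HasDerivAt (fun x => -(k * x + l₂)) (-k) v :=
    (((hasDerivAt_id v).const_mul k).add_const l₂).neg.congr_deriv (by rw [mul_one])
  exact (hgraph.congr_of_eventuallyEq (hg.critical.mono fun _ hx => hx.symm)).unique hline

theorem hasDerivAt_wavePotential_of_critical (hH : DifferentiableAt 𝕜 (uncurry H) (v, g v))
    (hg : DifferentiableAt 𝕜 g v) (hcrit : partialSnd H v (g v) = -(k * v + l₂)) :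
    HasDerivAt (wavePotential H g k l₁ l₂) (-partialFst H v (g v) - k * g v - l₁) v := by
  have hid := hasDerivAt_id v
  have h := ((((hasDerivAt_along_graph hH hg.hasDerivAt).neg.sub
    ((hid.const_mul k).mul hg.hasDerivAt)).sub (hid.const_mul l₁)).sub
    (hg.hasDerivAt.const_mul l₂))
  refine h.congr_deriv ?_
  simp only [smul_eq_mul, hcrit, id]
  ring

theorem IsWaveProfileAt.deriv_wavePotential_eventuallyEq (hg : IsWaveProfileAt H k l₂ g v)
    (hH : ContDiffAt 𝕜 1 (uncurry H) (v, g v)) :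
    deriv (wavePotential H g k l₁ l₂) =ᶠ[𝓝 v] fun x => -partialFst H x (g x) - k * g x - l₁ := by
  have hgraph : Tendsto (fun x => (x, g x)) (𝓝 v) (𝓝 (v, g v)) :=
    continuousAt_id.prodMk hg.differentiable.self_of_nhds.continuousAt
  filter_upwards [hgraph.eventually (eventually_differentiableAt_of_contDiffAt hH),
    hg.differentiable, hg.critical] with x hHx hgx hcrit
  exact (hasDerivAt_wavePotential_of_critical hHx hgx hcrit).deriv

theorem IsWaveProfileAt.iteratedDeriv_two_wavePotential (hg : IsWaveProfileAt H k l₂ g v)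
    (hH : ContDiffAt 𝕜 2 (uncurry H) (v, g v)) :
    iteratedDeriv 2 (wavePotential H g k l₁ l₂) v =
      -partialFst (partialFst H) v (g v) -
        deriv g v * (partialSnd (partialFst H) v (g v) + k) := by
  have hgv := hg.differentiable.self_of_nhds.hasDerivAt
  have h := ((hasDerivAt_along_graph (differentiableAt_partialFst hH) hgv).neg.sub
    (hgv.const_mul k)).sub_const l₁
  rw [iteratedDeriv_succ, iteratedDeriv_one,
    (hg.deriv_wavePotential_eventuallyEq (hH.of_le one_le_two)).deriv_eq]
  refine h.deriv.trans ?_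
  rw [smul_eq_mul]
  ring

theorem stmt19_general {n : WithTop ℕ∞} (hH : ContDiffAt 𝕜 n (uncurry H) (v, g v))
    (hn : minSmoothness 𝕜 2 ≤ n) (hb : b ≠ 0) (hg : IsWaveProfileAt H (c / b) l₂ g v) :
    (shiftedCharacteristicMatrix b c H v (g v)).trace =
        -2 * b * partialSnd (partialSnd H) v (g v) * deriv g v ∧
      (shiftedCharacteristicMatrix b c H v (g v)).det =
        b ^ 2 * partialSnd (partialSnd H) v (g v) *
          iteratedDeriv 2 (wavePotential H g (c / b) l₁ l₂) v := by
  have hH₂ : ContDiffAt 𝕜 2 (uncurry H) (v, g v) := hH.of_le (le_minSmoothness.trans hn)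
  have hcrit := hg.deriv_critical hH₂
  have hc : c = b * (c / b) := (mul_div_cancel₀ c hb).symm
  rw [shiftedCharacteristicMatrix_eq, Matrix.trace_fin_two_of, Matrix.det_fin_two_of,
    hg.iteratedDeriv_two_wavePotential hH₂, partialSnd_partialFst_comm hH hn]
  have hdiag : b * partialFst (partialSnd H) v (g v) + c =
      -b * deriv g v * partialSnd (partialSnd H) v (g v) := by
    linear_combination b * hcrit + hc
  constructor
  · linear_combination 2 * hdiag
  · rw [hdiag]
    linear_combination b ^ 2 * partialSnd (partialSnd H) v (g v) * deriv g v * hcrit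

end CharacteristicMatrix

section QuadraticHamiltonian

variable {𝕜 : Type*} [NontriviallyNormedField 𝕜] {τ f : 𝕜 → 𝕜} {v : 𝕜}

/-- The value at zero gradient, `v_x = 0`, of the Hamiltonian density of the system. -/
def quadraticHamiltonian (τ f : 𝕜 → 𝕜) : 𝕜 → 𝕜 → 𝕜 :=
  fun v u => (1 / 2) * τ v * u ^ 2 + f v

theorem contDiffAt_uncurry_quadraticHamiltonian {n : WithTop ℕ∞} (hτ : ContDiffAt 𝕜 n τ v)
    (hf : ContDiffAt 𝕜 n f v) (u : 𝕜) :
    ContDiffAt 𝕜 n (uncurry (quadraticHamiltonian τ f)) (v, u) :=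
  ((contDiffAt_const.mul (hτ.comp (v, u) contDiffAt_fst)).mul (contDiffAt_snd.pow 2)).add
    (hf.comp (v, u) contDiffAt_fst)

theorem partialSnd_quadraticHamiltonian [NeZero (2 : 𝕜)] (τ f : 𝕜 → 𝕜) :
    partialSnd (quadraticHamiltonian τ f) = fun v u => τ v * u := by
  funext v u
  have h := ((hasDerivAt_pow 2 u).const_mul ((1 / 2) * τ v)).add_const (f v)
  refine h.deriv.trans ?_
  simp only [Nat.cast_ofNat, Nat.add_one_sub_one, pow_one]
  field_simp

theorem partialSnd_partialSnd_quadraticHamiltonian [NeZero (2 : 𝕜)] (τ f : 𝕜 → 𝕜) (v u : 𝕜) :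
    partialSnd (partialSnd (quadraticHamiltonian τ f)) v u = τ v := by
  rw [partialSnd_quadraticHamiltonian]
  exact ((hasDerivAt_id u).const_mul (τ v)).deriv.trans (mul_one _)

theorem isWaveProfileAt_quadraticHamiltonian [NeZero (2 : 𝕜)] (hτ : ContDiffAt 𝕜 1 τ v)
    (hv : τ v ≠ 0) (f : 𝕜 → 𝕜) (k l₂ : 𝕜) :
    IsWaveProfileAt (quadraticHamiltonian τ f) k l₂ (fun x => -(k * x + l₂) / τ x) v where
  differentiable := by
    filter_upwards [eventually_differentiableAt_of_contDiffAt hτ,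
      hτ.continuousAt.eventually_ne hv] with x hτx hx
    exact (((differentiableAt_id.const_mul k).add_const l₂).neg).div hτx hx
  critical := by
    filter_upwards [hτ.continuousAt.eventually_ne hv] with x hx
    simp only [partialSnd_quadraticHamiltonian, mul_div_cancel₀ _ hx]

theorem wavePotential_quadraticHamiltonian (τ f g : 𝕜 → 𝕜) (k l₁ l₂ : 𝕜) :
    wavePotential (quadraticHamiltonian τ f) g k l₁ l₂ = fun v =>
      -f v - (1 / 2) * τ v * (g v) ^ 2 - k * v * g v - l₁ * v - l₂ * g v := by
  funext v
  simp only [wavePotential, quadraticHamiltonian]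
  ring

end QuadraticHamiltonian

/-- with `g(v) = −((c/b) v + l₂)/τ(v)`,
`H₀(v,u) = (1/2) τ(v) u² + f(v)`, `B = [[0,b],[b,0]]`, and the potential
`W(v) = −f(v) − (1/2) τ(v) g(v)² − (c/b) v g(v) − l₁ v − l₂ g(v)`, one has
`tr(B ∇²H₀(v,g(v)) + c I₂) = −2 b τ(v) g'(v)` and
`det(B ∇²H₀(v,g(v)) + c I₂) = b² τ(v) W''(v)` for every `v ∈ I`. -/
theorem stmt19 (I : Set ℝ) (hI : IsOpen I) (hconn : I.OrdConnected)
    (τ f : ℝ → ℝ) (hτ : ContDiffOn ℝ (⊤ : ℕ∞) τ I) (hf : ContDiffOn ℝ (⊤ : ℕ∞) f I)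
    (hτpos : ∀ v ∈ I, 0 < τ v)
    (b c l₁ l₂ : ℝ) (hb : b ≠ 0) :
    let g : ℝ → ℝ := fun v => -((c / b) * v + l₂) / τ v
    let H₀ : ℝ → ℝ → ℝ := fun v u => (1/2) * τ v * u ^ 2 + f v
    let B : Matrix (Fin 2) (Fin 2) ℝ := !![0, b; b, 0]
    let W : ℝ → ℝ := fun v =>
      -f v - (1/2) * τ v * (g v) ^ 2 - (c / b) * v * g v - l₁ * v - l₂ * g v
    let Hess : ℝ → ℝ → Matrix (Fin 2) (Fin 2) ℝ := fun v u =>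
      !![deriv (deriv (fun x => H₀ x u)) v,
         deriv (fun x => deriv (fun y => H₀ x y) u) v;
         deriv (fun y => deriv (fun x => H₀ x y) v) u,
         deriv (deriv (fun y => H₀ v y)) u]
    ∀ v ∈ I,
      (B * Hess v (g v) + c • (1 : Matrix (Fin 2) (Fin 2) ℝ)).trace
        = -2 * b * τ v * deriv g v ∧
      (B * Hess v (g v) + c • (1 : Matrix (Fin 2) (Fin 2) ℝ)).det
        = b ^ 2 * τ v * iteratedDeriv 2 W v := by
  intro g _ _ _ _ v hv
  have hI_nhds : I ∈ 𝓝 v := hI.mem_nhds hv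
  have hτv : ContDiffAt ℝ 2 τ v := (hτ.contDiffAt hI_nhds).of_le (mod_cast ENat.LEInfty.out)
  have hfv : ContDiffAt ℝ 2 f v := (hf.contDiffAt hI_nhds).of_le (mod_cast ENat.LEInfty.out)
  have hg := isWaveProfileAt_quadraticHamiltonian (hτv.of_le one_le_two) (hτpos v hv).ne'
    f (c / b) l₂
  have key := stmt19_general (l₁ := l₁)
    (contDiffAt_uncurry_quadraticHamiltonian hτv hfv (g v)) (by simp) hb hg
  rw [partialSnd_partialSnd_quadraticHamiltonian, wavePotential_quadraticHamiltonian] at key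
  exact key
end
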